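/- A cancellative monoid H is permutably factorial if and only if H is atomic and every atom of H is prime-like. -/

import Mathlib

def MAtom {H : Type*} [Monoid H] (u : H) : Prop :=
  ¬ IsUnit u ∧ ∀ a b : H, u = a * b → IsUnit a ∨ IsUnit b

def TAssoc {H : Type*} [Monoid H] (a b : H) : Prop :=
  ∃ ε η : Hˣ, b = (ε : H) * a * (η : H)

def Atomic (H : Type*) [Monoid H] : Prop :=
  ∀ a : H, ¬ IsUnit a → ∃ l : List H, l ≠ [] ∧ (∀ u ∈ l, MAtom u) ∧ a = l.prod

def T1Cond {H T : Type*} [Monoid H] [Monoid T] (φ : H →* T) : Prop :=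
  (∀ t : T, ∃ (ε η : Tˣ) (a : H), t = (ε : T) * φ a * (η : T)) ∧
    ∀ a : H, IsUnit (φ a) ↔ IsUnit a

def IsTransferHom {H T : Type*} [Monoid H] [Monoid T] (φ : H →* T) : Prop :=
  T1Cond φ ∧
    ∀ (a : H) (b₁ b₂ : T), φ a = b₁ * b₂ →
      ∃ (a₁ a₂ : H) (ε : Tˣ), a = a₁ * a₂ ∧ φ a₁ = b₁ * ((ε⁻¹ : Tˣ) : T) ∧ φ a₂ = (ε : T) * b₂

def IsWeakTransferHom {H T : Type*} [Monoid H] [Monoid T] (φ : H →* T) : Prop :=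
  T1Cond φ ∧
    ∀ (a : H) (n : ℕ), 0 < n → ∀ v : Fin n → T, (∀ i, MAtom (v i)) →
      φ a = (List.ofFn v).prod →
      ∃ (u : Fin n → H) (σ : Equiv.Perm (Fin n)),
        (∀ i, MAtom (u i)) ∧ a = (List.ofFn u).prod ∧ ∀ i, TAssoc (φ (u i)) (v (σ i))

def IsIsoatomic {H T : Type*} [Monoid H] [Monoid T] (φ : H →* T) : Prop :=
  ∀ u v : H, MAtom u → MAtom v → TAssoc (φ u) (φ v) → TAssoc u v

def lengthsOf {H : Type*} [Monoid H] (a : H) : Set ℕ :=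
  {n | (n = 0 ∧ IsUnit a) ∨
    ∃ l : List H, l ≠ [] ∧ (∀ u ∈ l, MAtom u) ∧ a = l.prod ∧ l.length = n}
/-- Divisibility up to permutation: `a ∣_p b`. -/
def dvdP {H : Type*} [Monoid H] (a b : H) : Prop :=
  ∃ (k l : ℕ) (u : Fin k → H) (v : Fin l → H),
    (∀ i, MAtom (u i)) ∧ (∀ j, MAtom (v j)) ∧
    TAssoc a (List.ofFn u).prod ∧ TAssoc b (List.ofFn v).prod ∧
    ∃ σ : Fin k ↪ Fin l, ∀ i, TAssoc (u i) (v (σ i))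

/-- An almost prime-like element (with respect to `∣_p`). -/
def APLike {H : Type*} [Monoid H] (q : H) : Prop :=
  ¬ IsUnit q ∧ ∀ a b : H, dvdP q (a * b) → dvdP q a ∨ dvdP q b

/-- The number of entries of `l` associated to `q`. -/
noncomputable def countAssoc {H : Type*} [Monoid H] (l : List H) (q : H) : ℕ :=
  Nat.card {i : Fin l.length // TAssoc (l.get i) q}

/-- The `q`-adic valuation of `a`: the set of numbers of occurrences (up to associativity)
of `q` in factorizations of `a` into atoms. -/
def Vq {H : Type*} [Monoid H] (q a : H) : Set ℕ :=
  {n | ∃ l : List H, (∀ u ∈ l, MAtom u) ∧ TAssoc a l.prod ∧ countAssoc l q = n}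

/-- A prime-like element: almost prime-like, with singleton `q`-adic valuations. -/
def PrimeLike {H : Type*} [Monoid H] (q : H) : Prop :=
  APLike q ∧ ∀ a : H, ∃ n : ℕ, Vq q a = {n}

/-- `H` is permutably factorial. -/
def PermutablyFactorial (H : Type*) [Monoid H] : Prop :=
  Atomic H ∧
    ∀ (k l : ℕ) (u : Fin k → H) (v : Fin l → H),
      (∀ i, MAtom (u i)) → (∀ j, MAtom (v j)) →
      (List.ofFn u).prod = (List.ofFn v).prod →
      ∃ σ : Fin k ≃ Fin l, ∀ i, TAssoc (u i) (v (σ i))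

/-!
Send a list of atoms to the multiset of its association classes. Unique factorization up to
permutation says that all factorizations of an element have the same multiset. The multiset of a
product is then the sum of the multisets of the factors, and `∣_p` becomes `≤` on multisets, where
a singleton below a sum is below one of the summands. Conversely, the valuations `V_q`, with `q`
ranging over the atoms, record all the multiplicities of such a multiset, so if each of them is
single-valued, the multiset is unique. An element factors into the empty list exactly when it is a
unit, because no right multiple of an atom is a unit, in any monoid.
-/

section MapUniv

variable {α β γ : Type*} [Fintype α] [Fintype β]

theorem count_map_univ_val [DecidableEq γ] (f : α → γ) (c : γ) :
    (Finset.univ.val.map f).count c = Nat.card {a // f a = c} := by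
  rw [Multiset.count_map, Nat.subtype_card (Finset.univ.filter (c = f ·))
    (fun a => by rw [Finset.mem_filter_univ, eq_comm])]
  rfl

theorem map_univ_val_le_map_univ_val_iff {f : α → γ} {g : β → γ} :
    Finset.univ.val.map f ≤ Finset.univ.val.map g ↔ ∃ σ : α ↪ β, ∀ a, f a = g (σ a) := by
  classical
  constructor
  · intro h
    have fiber_embedding (c : γ) : Nonempty ({a // f a = c} ↪ {b // g b = c}) := by
      have card_le := Multiset.count_le_of_le c h
      rw [count_map_univ_val, count_map_univ_val, Nat.card_eq_fintype_card,
        Nat.card_eq_fintype_card] at card_le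
      exact Function.Embedding.nonempty_of_card_le card_le
    let e (c : γ) := (fiber_embedding c).some
    exact ⟨(Equiv.sigmaFiberEquiv f).symm.toEmbedding.trans
      ((Function.Embedding.sigmaMap (.refl γ) e).trans (Equiv.sigmaFiberEquiv g).toEmbedding),
      fun a => (e (f a) ⟨a, rfl⟩).2.symm⟩
  · rintro ⟨σ, hσ⟩
    calc Finset.univ.val.map f = (Finset.univ.map σ).val.map g := by
          simp only [Finset.map_val, Multiset.map_map, Function.comp_apply, hσ]
      _ ≤ Finset.univ.val.map g :=
          Multiset.map_le_map (Finset.val_le_iff.2 (Finset.subset_univ _))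

theorem map_univ_val_eq_map_univ_val_iff {f : α → γ} {g : β → γ} :
    Finset.univ.val.map f = Finset.univ.val.map g ↔ ∃ σ : α ≃ β, ∀ a, f a = g (σ a) := by
  constructor
  · intro h
    obtain ⟨σ, hσ⟩ := map_univ_val_le_map_univ_val_iff.1 h.le
    have card_eq : Fintype.card α = Fintype.card β := by
      simpa only [Multiset.card_map, Finset.card_val, Finset.card_univ] using
        congrArg Multiset.card h
    exact ⟨Equiv.ofBijective σ
      ((Fintype.bijective_iff_injective_and_card σ).2 ⟨σ.injective, card_eq⟩), hσ⟩
  · rintro ⟨σ, hσ⟩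
    rw [← Multiset.map_univ_val_equiv σ, Multiset.map_map]
    exact Multiset.map_congr rfl fun a _ => hσ a

end MapUniv

section Monoid

variable {H : Type*} [Monoid H]

namespace TAssoc

variable {a b c : H}

theorem refl (a : H) : TAssoc a a :=
  ⟨1, 1, by rw [Units.val_one, one_mul, mul_one]⟩

theorem symm (h : TAssoc a b) : TAssoc b a := by
  obtain ⟨ε, η, rfl⟩ := h
  exact ⟨ε⁻¹, η⁻¹, by rw [mul_assoc, Units.mul_inv_cancel_right, Units.inv_mul_cancel_left]⟩

theorem trans (hab : TAssoc a b) (hbc : TAssoc b c) : TAssoc a c := by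
  obtain ⟨ε, η, rfl⟩ := hab
  obtain ⟨ε', η', rfl⟩ := hbc
  exact ⟨ε' * ε, η * η', by simp only [Units.val_mul, mul_assoc]⟩

theorem units_mul (ε : Hˣ) (a : H) : TAssoc (ε * a) a :=
  symm ⟨ε, 1, by rw [Units.val_one, mul_one]⟩

theorem mul_units (a : H) (η : Hˣ) : TAssoc (a * η) a :=
  symm ⟨1, η, by rw [Units.val_one, one_mul]⟩

theorem isUnit_iff (h : TAssoc a b) : IsUnit a ↔ IsUnit b := by
  obtain ⟨ε, η, rfl⟩ := h
  rw [Units.isUnit_mul_units, Units.isUnit_units_mul]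

theorem irreducible_iff (h : TAssoc a b) : Irreducible a ↔ Irreducible b := by
  obtain ⟨ε, η, rfl⟩ := h
  rw [irreducible_mul_units, irreducible_units_mul]

end TAssoc

theorem mAtom_iff_irreducible {a : H} : MAtom a ↔ Irreducible a :=
  irreducible_iff.symm

theorem TAssoc.mAtom_iff {a b : H} (h : TAssoc a b) : MAtom a ↔ MAtom b := by
  rw [mAtom_iff_irreducible, mAtom_iff_irreducible, h.irreducible_iff]

-- If `a * c = 1` then `a = a * (c * a)`, so `c * a` is a unit; being idempotent, it is `1`.
theorem MAtom.not_isUnit_mul {a : H} (ha : MAtom a) (b : H) : ¬ IsUnit (a * b) := by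
  rintro ⟨ε, hε⟩
  obtain ⟨c, hac⟩ : ∃ c, a * c = 1 :=
    ⟨b * ((ε⁻¹ : Hˣ) : H), by rw [← mul_assoc, ← hε, Units.mul_inv]⟩
  have isUnit_mul : IsUnit (c * a) :=
    (ha.2 a (c * a) (by rw [← mul_assoc, hac, one_mul])).resolve_left ha.1
  have isIdempotentElem_mul : IsIdempotentElem (c * a) :=
    show c * a * (c * a) = c * a by rw [mul_assoc, ← mul_assoc a, hac, one_mul]
  have hca : c * a = 1 :=
    (IsIdempotentElem.iff_eq_one_of_isUnit isUnit_mul).1 isIdempotentElem_mul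
  exact ha.1 ⟨⟨a, c, hac, hca⟩, rfl⟩

section AssocClass

variable (H) in
/-- The quotient of `H` by two-sided association, `H` not being assumed commutative. -/
def AssocClass : Type _ :=
  Quotient (⟨TAssoc, TAssoc.refl, TAssoc.symm, TAssoc.trans⟩ : Setoid H)

/-- The class of an element up to two-sided association. -/
def assocClass (a : H) : AssocClass H :=
  Quotient.mk _ a

theorem assocClass_surjective : Function.Surjective (assocClass (H := H)) :=
  Quotient.mk_surjective

theorem assocClass_eq_iff {a b : H} : assocClass a = assocClass b ↔ TAssoc a b :=
  Quotient.eq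

/-- The multiset of association classes of the entries of a list: what remains of a factorization
up to permutation and association. -/
def assocClasses (l : List H) : Multiset (AssocClass H) :=
  ↑(l.map assocClass)

theorem mem_assocClasses {c : AssocClass H} {l : List H} :
    c ∈ assocClasses l ↔ ∃ u ∈ l, assocClass u = c := by
  rw [assocClasses, Multiset.mem_coe, List.mem_map]

theorem assocClasses_append (l m : List H) :
    assocClasses (l ++ m) = assocClasses l + assocClasses m := by
  rw [assocClasses, List.map_append, ← Multiset.coe_add, assocClasses, assocClasses]

theorem assocClasses_ofFn {n : ℕ} (u : Fin n → H) :
    assocClasses (List.ofFn u) = Finset.univ.val.map fun i => assocClass (u i) := by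
  rw [assocClasses, List.map_ofFn, Fin.univ_val_map, Function.comp_def]

theorem assocClasses_ofFn_le_iff {k l : ℕ} {u : Fin k → H} {v : Fin l → H} :
    assocClasses (List.ofFn u) ≤ assocClasses (List.ofFn v) ↔
      ∃ σ : Fin k ↪ Fin l, ∀ i, TAssoc (u i) (v (σ i)) := by
  simp only [assocClasses_ofFn, map_univ_val_le_map_univ_val_iff, assocClass_eq_iff]

theorem assocClasses_ofFn_eq_iff {k l : ℕ} {u : Fin k → H} {v : Fin l → H} :
    assocClasses (List.ofFn u) = assocClasses (List.ofFn v) ↔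
      ∃ σ : Fin k ≃ Fin l, ∀ i, TAssoc (u i) (v (σ i)) := by
  simp only [assocClasses_ofFn, map_univ_val_eq_map_univ_val_iff, assocClass_eq_iff]

theorem forall_mAtom_of_assocClasses_eq {l m : List H} (h : assocClasses l = assocClasses m)
    (hl : ∀ u ∈ l, MAtom u) : ∀ v ∈ m, MAtom v := by
  intro v hv
  obtain ⟨u, hu, huv⟩ := mem_assocClasses.1 (h ▸ mem_assocClasses.2 ⟨v, hv, rfl⟩)
  exact (assocClass_eq_iff.1 huv).mAtom_iff.1 (hl u hu)

open scoped Classical in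
theorem countAssoc_eq_count (l : List H) (q : H) :
    countAssoc l q = (assocClasses l).count (assocClass q) := by
  conv_rhs => rw [← List.ofFn_get l, assocClasses_ofFn, count_map_univ_val]
  simp only [assocClass_eq_iff, countAssoc]

theorem exists_prod_eq_units_mul_prod_mul_units {l : List H} (hl : l ≠ []) (ε η : Hˣ) :
    ∃ m : List H, m.prod = ε * l.prod * η ∧ assocClasses m = assocClasses l := by
  induction l generalizing ε with
  | nil => exact absurd rfl hl
  | cons a t ih =>
    rcases eq_or_ne t [] with rfl | ht
    · refine ⟨[ε * a * η], by simp only [List.prod_singleton], ?_⟩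
      have : assocClass (ε * a * η) = assocClass a :=
        assocClass_eq_iff.2 (TAssoc.symm ⟨ε, η, rfl⟩)
      simp only [assocClasses, List.map_singleton, this]
    · obtain ⟨m, hprod, hclasses⟩ := ih ht 1
      refine ⟨ε * a :: m, ?_, ?_⟩
      · rw [List.prod_cons, hprod, List.prod_cons, Units.val_one, one_mul, mul_assoc, mul_assoc,
          mul_assoc]
      · have : assocClass (ε * a) = assocClass a := assocClass_eq_iff.2 (TAssoc.units_mul ε a)
        simpa only [assocClasses, List.map_cons, ← Multiset.cons_coe, this,
          Multiset.cons_inj_right] using hclasses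

end AssocClass

/-- `l` is a factorization of `a` into atoms, up to association, so that units have the empty
factorization. -/
structure IsAtomFactorization (l : List H) (a : H) : Prop where
  mAtom : ∀ u ∈ l, MAtom u
  tAssoc_prod : TAssoc a l.prod

namespace IsAtomFactorization

variable {a b : H} {l m : List H}

theorem nil_of_isUnit (ha : IsUnit a) : IsAtomFactorization [] a := by
  obtain ⟨ε, rfl⟩ := ha
  exact ⟨List.forall_mem_nil _,
    by simpa only [mul_one, List.prod_nil] using TAssoc.units_mul ε 1⟩

theorem singleton (ha : MAtom a) : IsAtomFactorization [a] a :=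
  ⟨by simpa only [List.mem_singleton, forall_eq] using ha,
    by simpa only [List.prod_singleton] using TAssoc.refl a⟩

theorem of_tAssoc (hl : IsAtomFactorization l a) (hba : TAssoc b a) : IsAtomFactorization l b :=
  ⟨hl.mAtom, hba.trans hl.tAssoc_prod⟩

theorem eq_nil_iff (hl : IsAtomFactorization l a) : l = [] ↔ IsUnit a := by
  rw [hl.tAssoc_prod.isUnit_iff]
  cases l with
  | nil => simp only [List.prod_nil, isUnit_one]
  | cons u t =>
    simpa only [List.prod_cons, reduceCtorEq, false_iff] using
      (hl.mAtom u List.mem_cons_self).not_isUnit_mul t.prod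

theorem exists_prod_eq (hl : IsAtomFactorization l a) (ha : ¬ IsUnit a) :
    ∃ m : List H, (∀ u ∈ m, MAtom u) ∧ m.prod = a ∧ assocClasses m = assocClasses l := by
  obtain ⟨ε, η, rfl⟩ := hl.tAssoc_prod.symm
  obtain ⟨m, hprod, hclasses⟩ :=
    exists_prod_eq_units_mul_prod_mul_units (mt hl.eq_nil_iff.1 ha) ε η
  exact ⟨m, forall_mAtom_of_assocClasses_eq hclasses.symm hl.mAtom, hprod, hclasses⟩

theorem exists_mul (hl : IsAtomFactorization l a) (hm : IsAtomFactorization m b) :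
    ∃ n : List H, IsAtomFactorization n (a * b) ∧
      assocClasses n = assocClasses l + assocClasses m := by
  by_cases ha : IsUnit a
  · obtain rfl := hl.eq_nil_iff.2 ha
    obtain ⟨ε, rfl⟩ := ha
    exact ⟨m, hm.of_tAssoc (TAssoc.units_mul ε b), assocClasses_append [] m⟩
  by_cases hb : IsUnit b
  · obtain rfl := hm.eq_nil_iff.2 hb
    obtain ⟨η, rfl⟩ := hb
    exact ⟨l, hl.of_tAssoc (TAssoc.mul_units a η),
      by rw [← assocClasses_append, List.append_nil]⟩
  obtain ⟨l', hl', rfl, hll'⟩ := hl.exists_prod_eq ha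
  obtain ⟨m', hm', rfl, hmm'⟩ := hm.exists_prod_eq hb
  exact ⟨l' ++ m', ⟨List.forall_mem_append.2 ⟨hl', hm'⟩, by rw [List.prod_append]; exact .refl _⟩,
    by rw [assocClasses_append, hll', hmm']⟩

end IsAtomFactorization

theorem Atomic.exists_isAtomFactorization (hH : Atomic H) (a : H) :
    ∃ l : List H, IsAtomFactorization l a := by
  by_cases ha : IsUnit a
  · exact ⟨[], .nil_of_isUnit ha⟩
  · obtain ⟨l, -, hl, rfl⟩ := hH a ha
    exact ⟨l, hl, TAssoc.refl _⟩

open scoped Classical in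
theorem mem_Vq_iff {q a : H} {n : ℕ} :
    n ∈ Vq q a ↔
      ∃ l, IsAtomFactorization l a ∧ (assocClasses l).count (assocClass q) = n := by
  simp only [Vq, Set.mem_ofPred_eq, countAssoc_eq_count]
  exact exists_congr fun l =>
    ⟨fun ⟨hl, ha, hn⟩ => ⟨⟨hl, ha⟩, hn⟩, fun ⟨⟨hl, ha⟩, hn⟩ => ⟨hl, ha, hn⟩⟩

theorem dvdP_iff_exists_assocClasses_le {a b : H} :
    dvdP a b ↔ ∃ l m, IsAtomFactorization l a ∧ IsAtomFactorization m b ∧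
      assocClasses l ≤ assocClasses m := by
  constructor
  · rintro ⟨k, n, u, v, hu, hv, ha, hb, hσ⟩
    exact ⟨List.ofFn u, List.ofFn v, ⟨List.forall_mem_ofFn_iff.2 hu, ha⟩,
      ⟨List.forall_mem_ofFn_iff.2 hv, hb⟩, assocClasses_ofFn_le_iff.2 hσ⟩
  · rintro ⟨l, m, ⟨hl, ha⟩, ⟨hm, hb⟩, hle⟩
    rw [← List.ofFn_get l] at hl ha hle
    rw [← List.ofFn_get m] at hm hb hle
    exact ⟨l.length, m.length, l.get, m.get, List.forall_mem_ofFn_iff.1 hl,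
      List.forall_mem_ofFn_iff.1 hm, ha, hb, assocClasses_ofFn_le_iff.1 hle⟩

theorem permutablyFactorial_iff_assocClasses_eq :
    PermutablyFactorial H ↔ Atomic H ∧ ∀ (a : H) (l m : List H),
      IsAtomFactorization l a → IsAtomFactorization m a → assocClasses l = assocClasses m := by
  refine and_congr_right fun _ => ⟨fun h a l m hl hm => ?_, fun h k n u v hu hv huv => ?_⟩
  · by_cases ha : IsUnit a
    · rw [hl.eq_nil_iff.2 ha, hm.eq_nil_iff.2 ha]
    obtain ⟨l', hl', hl'a, hll'⟩ := hl.exists_prod_eq ha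
    obtain ⟨m', hm', hm'a, hmm'⟩ := hm.exists_prod_eq ha
    rw [← hll', ← hmm', ← List.ofFn_get l', ← List.ofFn_get m', assocClasses_ofFn_eq_iff]
    exact h _ _ _ _ (fun i => hl' _ (List.get_mem l' i)) (fun i => hm' _ (List.get_mem m' i))
      (by rw [List.ofFn_get, List.ofFn_get, hl'a, hm'a])
  · exact assocClasses_ofFn_eq_iff.1 <| h (List.ofFn u).prod (List.ofFn u) (List.ofFn v)
      ⟨List.forall_mem_ofFn_iff.2 hu, TAssoc.refl _⟩
      ⟨List.forall_mem_ofFn_iff.2 hv, huv ▸ TAssoc.refl _⟩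

namespace PermutablyFactorial

variable {a b q : H} {l m : List H}

theorem assocClasses_eq (hH : PermutablyFactorial H) (hl : IsAtomFactorization l a)
    (hm : IsAtomFactorization m a) : assocClasses l = assocClasses m :=
  (permutablyFactorial_iff_assocClasses_eq.1 hH).2 a l m hl hm

theorem dvdP_iff_le (hH : PermutablyFactorial H) (hl : IsAtomFactorization l a)
    (hm : IsAtomFactorization m b) : dvdP a b ↔ assocClasses l ≤ assocClasses m := by
  refine dvdP_iff_exists_assocClasses_le.trans ⟨?_, fun h => ⟨l, m, hl, hm, h⟩⟩
  rintro ⟨l', m', hl', hm', h⟩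
  rwa [hH.assocClasses_eq hl hl', hH.assocClasses_eq hm hm']

theorem dvdP_iff_mem (hH : PermutablyFactorial H) (hq : MAtom q) (hl : IsAtomFactorization l a) :
    dvdP q a ↔ assocClass q ∈ assocClasses l :=
  (hH.dvdP_iff_le (.singleton hq) hl).trans Multiset.singleton_le

theorem apLike (hH : PermutablyFactorial H) (hq : MAtom q) : APLike q := by
  refine ⟨hq.1, fun a b => ?_⟩
  obtain ⟨l, hl⟩ := hH.1.exists_isAtomFactorization a
  obtain ⟨m, hm⟩ := hH.1.exists_isAtomFactorization b
  obtain ⟨n, hn, hnlm⟩ := hl.exists_mul hm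
  rw [hH.dvdP_iff_mem hq hn, hH.dvdP_iff_mem hq hl, hH.dvdP_iff_mem hq hm, hnlm,
    Multiset.mem_add]
  exact id

theorem exists_Vq_eq_singleton (hH : PermutablyFactorial H) (q a : H) : ∃ n, Vq q a = {n} := by
  classical
  obtain ⟨l, hl⟩ := hH.1.exists_isAtomFactorization a
  refine ⟨(assocClasses l).count (assocClass q),
    Set.eq_singleton_iff_unique_mem.2 ⟨mem_Vq_iff.2 ⟨l, hl, rfl⟩, fun n hn => ?_⟩⟩
  obtain ⟨m, hm, rfl⟩ := mem_Vq_iff.1 hn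
  rw [hH.assocClasses_eq hm hl]

theorem primeLike (hH : PermutablyFactorial H) (hq : MAtom q) : PrimeLike q :=
  ⟨hH.apLike hq, hH.exists_Vq_eq_singleton q⟩

end PermutablyFactorial

theorem IsAtomFactorization.count_eq_zero [DecidableEq (AssocClass H)] {a q : H} {l : List H}
    (hl : IsAtomFactorization l a) (hq : ¬ MAtom q) :
    (assocClasses l).count (assocClass q) = 0 := by
  refine Multiset.count_eq_zero.2 fun hmem => hq ?_
  obtain ⟨u, hu, huq⟩ := mem_assocClasses.1 hmem
  exact (assocClass_eq_iff.1 huq).mAtom_iff.1 (hl.mAtom u hu)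

theorem assocClasses_eq_of_Vq_subsingleton {a : H} {l m : List H}
    (hV : ∀ q : H, MAtom q → (Vq q a).Subsingleton)
    (hl : IsAtomFactorization l a) (hm : IsAtomFactorization m a) :
    assocClasses l = assocClasses m := by
  classical
  refine Multiset.ext.2 fun c => ?_
  obtain ⟨q, rfl⟩ := assocClass_surjective c
  by_cases hq : MAtom q
  · exact hV q hq (mem_Vq_iff.2 ⟨l, hl, rfl⟩) (mem_Vq_iff.2 ⟨m, hm, rfl⟩)
  · rw [hl.count_eq_zero hq, hm.count_eq_zero hq]

end Monoid

theorem permutablyFactorial_iff_atoms_primeLike_general {H : Type*} [Monoid H] :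
    [PermutablyFactorial H,
      Atomic H ∧ ∀ u : H, MAtom u → PrimeLike u,
      Atomic H ∧ ∀ u : H, MAtom u → ∀ a : H, (Vq u a).Subsingleton].TFAE := by
  tfae_have 1 → 2 := fun hH => ⟨hH.1, fun _ => hH.primeLike⟩
  tfae_have 2 → 3 := by
    refine fun ⟨hA, hprime⟩ => ⟨hA, fun u hu a => ?_⟩
    obtain ⟨n, hn⟩ := (hprime u hu).2 a
    exact hn ▸ Set.subsingleton_singleton
  tfae_have 3 → 1 := fun ⟨hA, hV⟩ => permutablyFactorial_iff_assocClasses_eq.2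
    ⟨hA, fun a _ _ => assocClasses_eq_of_Vq_subsingleton fun u hu => hV u hu a⟩
  tfae_finish

/-- A cancellative monoid is permutably factorial iff it is atomic and
every atom is prime-like. -/
theorem permutablyFactorial_iff_atoms_primeLike {H : Type*} [CancelMonoid H] :
    PermutablyFactorial H ↔ (Atomic H ∧ ∀ u : H, MAtom u → PrimeLike u) := by
  exact permutablyFactorial_iff_atoms_primeLike_general.out 0 1
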